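/- Let X be a holomorphic vector field on a neighborhood of 0 in ℂⁿ with X(0) = 0, and suppose DX(0) = S + N where S is the diagonal endomorphism of ℂⁿ with diagonal entries γ = (γ₁, …, γₙ) ∈ ℂⁿ, N is nilpotent, and S∘N = N∘S. Let r be the toric degree of γ and let ρ¹, …, ρʳ ∈ ℤⁿ be a ℤ-basis of Q(γ). Then X admits a convergent Poincaré–Dulac normalization if and only if there exist an open neighborhood U of 0 in ℂⁿ and holomorphic vector fields V₁, …, V_r : U → ℂⁿ such that: (a) V_k(0) = 0 and DV_k(0) is the diagonal endomorphism with entries ρᵏ = (ρᵏ₁, …, ρᵏₙ) for each k; (b) [V_j, V_k] = 0 on U for all j, k; (c) [X, V_k] = 0 on U for all k; (d) for each k and each x ∈ U there is a curve c : ℝ → U with c(0) = x, satisfying the real differential equation c′(t) = i·V_k(c(t)) for all t ∈ ℝ (where i = √−1 acts by complex scalar multiplication), and c(t + 2π) = c(t) for all t ∈ ℝ. -/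

import Mathlib

/-- `Y` is in Poincaré–Dulac normal form on the neighborhood `U` of `0`:
writing the Jordan–Chevalley decomposition `DY(0) = S + N` with `S` semisimple,
`N` nilpotent and `S ∘ N = N ∘ S`, the Lie bracket `[Y, Yˢ]` (where `Yˢ x = S x`)
vanishes on `U`. -/
def InPDNormalForm (𝕂 : Type*) [NontriviallyNormedField 𝕂] {n : ℕ}
    (Y : (Fin n → 𝕂) → (Fin n → 𝕂)) (U : Set (Fin n → 𝕂)) : Prop :=
  ∃ S N : (Fin n → 𝕂) →L[𝕂] (Fin n → 𝕂),
    fderiv 𝕂 Y 0 = S + N ∧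
    Module.End.IsSemisimple (S : Module.End 𝕂 (Fin n → 𝕂)) ∧
    IsNilpotent (N : Module.End 𝕂 (Fin n → 𝕂)) ∧
    S ∘L N = N ∘L S ∧
    ∀ x ∈ U, VectorField.lieBracket 𝕂 Y (fun y => S y) x = 0

/-- `X` admits a convergent Poincaré–Dulac normalization: there are an analytic
vector field `Y` near `0`, in Poincaré–Dulac normal form with `Y 0 = 0`, and an
analytic map `φ` near `0` with `φ 0 = 0` and `Dφ(0)` invertible, such that
`Dφ(x) (Y x) = X (φ x)` for all `x` near `0`. -/
def AdmitsPDNormalization (𝕂 : Type*) [NontriviallyNormedField 𝕂] {n : ℕ}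
    (X : (Fin n → 𝕂) → (Fin n → 𝕂)) : Prop :=
  ∃ (V : Set (Fin n → 𝕂)) (Y φ : (Fin n → 𝕂) → (Fin n → 𝕂)),
    IsOpen V ∧ (0 : Fin n → 𝕂) ∈ V ∧
    AnalyticOnNhd 𝕂 Y V ∧ AnalyticOnNhd 𝕂 φ V ∧
    Y 0 = 0 ∧ φ 0 = 0 ∧ Function.Bijective (fderiv 𝕂 φ 0) ∧
    InPDNormalForm 𝕂 Y V ∧
    ∀ x ∈ V, fderiv 𝕂 φ x (Y x) = X (φ x)


/-- `c ∈ ℤⁿ` is a resonance relation for the eigenvalues `γ ∈ ℂⁿ`: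
`Σ c_j γ_j = 0`, all `c_j ≥ -1`, `Σ c_j ≥ 1`, and at most one `c_j` is
negative. -/
def IsResonanceRelation {n : ℕ} (γ : Fin n → ℂ) (c : Fin n → ℤ) : Prop :=
  (∑ j, (c j : ℂ) * γ j = 0) ∧ (∀ j, -1 ≤ c j) ∧ (1 ≤ ∑ j, c j) ∧
    ∀ j k, c j < 0 → c k < 0 → j = k

/-- The lattice `Q(γ) ⊆ ℤⁿ` of `ρ` with `Σ ρ_j c_j = 0` for every resonance
relation `c`, and `ρ_j = ρ_k` whenever `γ_j = γ_k`. -/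
def QLattice {n : ℕ} (γ : Fin n → ℂ) : Set (Fin n → ℤ) :=
  {ρ | (∀ c, IsResonanceRelation γ c → ∑ j, ρ j * c j = 0) ∧
    ∀ j k, γ j = γ k → ρ j = ρ k}

/-- The diagonal (continuous) linear endomorphism of `ℂⁿ` with diagonal
entries `γ`. -/
noncomputable def diagCLM {n : ℕ} (γ : Fin n → ℂ) :
    (Fin n → ℂ) →L[ℂ] (Fin n → ℂ) :=
  LinearMap.toContinuousLinearMap (Matrix.toLin' (Matrix.diagonal γ))

open Filter Topology Set

section LinearAlgebra

variable {n : ℕ}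

theorem diagCLM_apply (γ x : Fin n → ℂ) : diagCLM γ x = γ * x := by
  ext j
  simp [diagCLM, Matrix.mulVec_diagonal]

theorem diagCLM_isSemisimple (γ : Fin n → ℂ) :
    Module.End.IsSemisimple (diagCLM γ : Module.End ℂ (Fin n → ℂ)) := by
  classical
  let p : Polynomial ℂ := ∏ a ∈ Finset.univ.image γ, (Polynomial.X - Polynomial.C a)
  have hp : Squarefree p := by
    refine (Polynomial.separable_prod_X_sub_C_iff'.2 ?_).squarefree
    intro x _ y _ h
    exact h
  have hpow (q : Polynomial ℂ) (x : Fin n → ℂ) (j : Fin n) :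
      (Polynomial.aeval (diagCLM γ : Module.End ℂ (Fin n → ℂ)) q) x j = q.eval (γ j) * x j := by
    induction q using Polynomial.induction_on' generalizing x with
    | add p q hp hq => simp [hp, hq, add_mul]
    | monomial k a =>
      rw [Polynomial.aeval_monomial, Polynomial.eval_monomial, Algebra.algebraMap_eq_smul_one,
        smul_one_mul]
      have key : ∀ y : Fin n → ℂ,
          ((diagCLM γ : Module.End ℂ (Fin n → ℂ)) ^ k) y j = γ j ^ k * y j := by
        induction k with
        | zero => simp
        | succ k ih =>
          intro y
          rw [pow_succ, Module.End.mul_apply, ih, ContinuousLinearMap.coe_coe, diagCLM_apply,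
            Pi.mul_apply]
          ring
      rw [LinearMap.smul_apply, Pi.smul_apply, key, smul_eq_mul, mul_assoc]
  refine Module.End.isSemisimple_of_squarefree_aeval_eq_zero hp ?_
  refine LinearMap.ext fun x => funext fun i => ?_
  rw [hpow, LinearMap.zero_apply, Pi.zero_apply]
  have : p.eval (γ i) = 0 := by
    simp only [p, Polynomial.eval_prod]
    exact Finset.prod_eq_zero (Finset.mem_image_of_mem γ (Finset.mem_univ i)) (by simp)
  rw [this, zero_mul]

/-- The eigenvalue vector lies in the complex span of its toric lattice. -/
theorem exists_eq_sum_smul_of_qLattice {γ : Fin n → ℂ} {r : ℕ} {ρ : Fin r → Fin n → ℤ}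
    (hρ : ∀ σ ∈ QLattice γ, ∃ a : Fin r → ℤ, ∑ k, a k • ρ k = σ) :
    ∃ α : Fin r → ℂ, γ = ∑ k, α k • fun j => (ρ k j : ℂ) := by
  classical
  let b := Module.Basis.ofVectorSpace ℚ ℂ
  let s : Finset _ := Finset.univ.biUnion fun j => (b.repr (γ j)).support
  have hγ (j : Fin n) : γ j = ∑ i ∈ s, (b.repr (γ j) i : ℂ) * b i := by
    conv_lhs => rw [← b.linearCombination_repr (γ j)]
    rw [Finsupp.linearCombination_apply, Finsupp.sum_of_support_subset (s := s)]
    · simp [Rat.smul_def]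
    · exact Finset.subset_biUnion_of_mem (fun j => (b.repr (γ j)).support) (Finset.mem_univ j)
    · simp
  have hcoord (i) : ∃ β : Fin r → ℂ, ∀ j, (b.repr (γ j) i : ℂ) = ∑ k, β k * ρ k j := by
    obtain ⟨⟨D, hD⟩, hDint⟩ := IsLocalization.exist_integer_multiples_of_finset
      (nonZeroDivisors ℤ) (Finset.univ.image fun j => b.repr (γ j) i)
    have hD0 : (D : ℂ) ≠ 0 := by exact_mod_cast nonZeroDivisors.ne_zero hD
    have hclear (j : Fin n) : ∃ z : ℤ, (z : ℚ) = D * b.repr (γ j) i := by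
      obtain ⟨z, hz⟩ := hDint _ (Finset.mem_image_of_mem _ (Finset.mem_univ j))
      exact ⟨z, by simpa using hz⟩
    choose z hz using hclear
    have hzQ : z ∈ QLattice γ := by
      constructor
      · intro c hc
        have h1 := congrArg (fun w => b.repr w i) hc.1
        have h2 : ∑ j, (c j : ℚ) * b.repr (γ j) i = 0 := by
          have h3 (j : Fin n) : (c j : ℂ) * γ j = (c j : ℚ) • γ j := by
            simp [Rat.smul_def]
          simpa [h3] using h1
        have h4 : (∑ j, (z j : ℚ) * c j) = 0 := by
          calc _ = D * ∑ j, (c j : ℚ) * b.repr (γ j) i := by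
                rw [Finset.mul_sum]
                exact Finset.sum_congr rfl fun j _ => by rw [hz]; ring
            _ = 0 := by rw [h2, mul_zero]
        exact_mod_cast h4
      · intro j k hjk
        have : (z j : ℚ) = z k := by rw [hz, hz, hjk]
        exact_mod_cast this
    obtain ⟨a, ha⟩ := hρ z hzQ
    refine ⟨fun k => a k / D, fun j => ?_⟩
    have h1 : ((z j : ℚ) : ℂ) = ((D * b.repr (γ j) i : ℚ) : ℂ) := by rw [hz]
    have h2 : (z j : ℂ) = ∑ k, (a k : ℂ) * ρ k j := by
      rw [← ha]; simp
    push_cast at h1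
    rw [h2] at h1
    simp_rw [div_mul_eq_mul_div]
    rw [← Finset.sum_div, h1, mul_div_cancel_left₀ _ hD0]
  choose β hβ using hcoord
  refine ⟨fun k => ∑ i ∈ s, β i k * b i, ?_⟩
  ext j
  rw [hγ j]
  simp only [hβ, Finset.sum_apply, Pi.smul_apply, smul_eq_mul, Finset.sum_mul]
  rw [Finset.sum_comm]
  exact Finset.sum_congr rfl fun k _ => Finset.sum_congr rfl fun i _ => by ring

end LinearAlgebra

section LocalInverse

theorem AnalyticAt.fun_clm_apply {E F G : Type*} [NormedAddCommGroup E] [NormedSpace ℂ E]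
    [NormedAddCommGroup F] [NormedSpace ℂ F] [NormedAddCommGroup G] [NormedSpace ℂ G]
    {f : E → F →L[ℂ] G} {g : E → F} {x : E} (hf : AnalyticAt ℂ f x) (hg : AnalyticAt ℂ g x) :
    AnalyticAt ℂ (fun x => f x (g x)) x :=
  ((ContinuousLinearMap.id ℂ (F →L[ℂ] G)).analyticAt_bilinear (f x, g x)).comp₂ hf hg

/-- An analytic map tangent to the identity at the origin has an analytic local inverse. -/
theorem exists_analyticAt_localInverse {E : Type*} [NormedAddCommGroup E] [NormedSpace ℂ E]
    [CompleteSpace E] {h : E → E} (hh : AnalyticAt ℂ h 0) (h0 : h 0 = 0)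
    (hd : fderiv ℂ h 0 = ContinuousLinearMap.id ℂ E) :
    ∃ g : E → E, AnalyticAt ℂ g 0 ∧ g 0 = 0 ∧ fderiv ℂ g 0 = ContinuousLinearMap.id ℂ E ∧
      (∀ᶠ x in 𝓝 0, g (h x) = x) ∧ ∀ᶠ y in 𝓝 0, h (g y) = y := by
  let i : E ≃L[ℂ] E := ContinuousLinearEquiv.refl ℂ E
  have hs : HasStrictFDerivAt h (i : E →L[ℂ] E) 0 := by
    have := hh.hasStrictFDerivAt
    rwa [hd] at this
  let R : OpenPartialHomeomorph E E := hs.toOpenPartialHomeomorph h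
  have hR : ∀ x, R x = h x := fun x => rfl
  have hx : (0 : E) ∈ R.source := hs.mem_toOpenPartialHomeomorph_source
  obtain ⟨p, hp⟩ := hh
  have hp1 : p 1 = (continuousMultilinearCurryFin1 ℂ E E).symm i := by
    have := hp.fderiv_eq
    rw [hd] at this
    rw [LinearIsometryEquiv.eq_symm_apply]
    exact this.symm
  have hg : AnalyticAt ℂ R.symm 0 := by
    have := (R.hasFPowerSeriesAt_symm hx hp hp1).analyticAt
    rwa [hR, h0] at this
  have hg0 : R.symm 0 = 0 := by
    have := R.left_inv hx
    rwa [hR, h0] at this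
  have hl : ∀ᶠ x in 𝓝 0, R.symm (h x) = x := R.eventually_left_inverse hx
  have hr : ∀ᶠ y in 𝓝 0, h (R.symm y) = y :=
    R.eventually_right_inverse (by simpa [hR, h0] using R.map_source hx)
  refine ⟨R.symm, hg, hg0, ?_, hl, hr⟩
  have hcomp : HasFDerivAt (h ∘ R.symm)
      ((ContinuousLinearMap.id ℂ E).comp (fderiv ℂ R.symm 0)) 0 := by
    refine HasFDerivAt.comp (0 : E) ?_ hg.differentiableAt.hasFDerivAt
    rw [hg0]
    exact hs.hasFDerivAt
  have hid : HasFDerivAt (h ∘ R.symm) (ContinuousLinearMap.id ℂ E) 0 :=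
    (hasFDerivAt_id (0 : E)).congr_of_eventuallyEq hr
  simpa using hcomp.unique hid

end LocalInverse

section PartialDerivatives

variable {n : ℕ}

/-- The iterated partial derivative along a list of coordinates. -/
noncomputable def iteratedPartial : List (Fin n) → ((Fin n → ℂ) → ℂ) → (Fin n → ℂ) → ℂ
  | [], f => f
  | i :: l, f => iteratedPartial l fun x => fderiv ℂ f x (Pi.single i 1)

theorem Filter.EventuallyEq.iteratedPartial {f g : (Fin n → ℂ) → ℂ} (l : List (Fin n))
    (h : f =ᶠ[𝓝 0] g) : iteratedPartial l f =ᶠ[𝓝 0] iteratedPartial l g := by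
  induction l generalizing f g with
  | nil => exact h
  | cons i l ih =>
    exact ih ((h.fderiv (𝕜 := ℂ)).mono fun x hx => by simp only [hx])

theorem AnalyticAt.fderiv_apply_const {E F : Type*} [NormedAddCommGroup E] [NormedSpace ℂ E]
    [NormedAddCommGroup F] [NormedSpace ℂ F] [CompleteSpace F] {f : E → F} {x : E}
    (hf : AnalyticAt ℂ f x) (v : E) : AnalyticAt ℂ (fun x => fderiv ℂ f x v) x :=
  hf.fderiv.fun_clm_apply analyticAt_const

/-- Partial derivatives shift the eigenvalue of a diagonal linear derivation. -/
theorem fderiv_euler_sub_apply_single {f : (Fin n → ℂ) → ℂ} (hf : AnalyticAt ℂ f 0)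
    (γ : Fin n → ℂ) (a : ℂ) (i : Fin n) :
    (fun x => fderiv ℂ (fun x => fderiv ℂ f x (γ * x) - a * f x) x (Pi.single i 1)) =ᶠ[𝓝 0]
      fun x => fderiv ℂ (fun x => fderiv ℂ f x (Pi.single i 1)) x (γ * x) -
        (a - γ i) * fderiv ℂ f x (Pi.single i 1) := by
  filter_upwards [hf.eventually_analyticAt] with x hx
  have hsymm : IsSymmSndFDerivAt ℂ f x :=
    (hx.contDiffAt (n := ⊤)).isSymmSndFDerivAt (by simp)
  have hd : HasFDerivAt (fderiv ℂ f) (fderiv ℂ (fderiv ℂ f) x) x :=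
    hx.fderiv.differentiableAt.hasFDerivAt
  have h1 : HasFDerivAt (fun x => γ * x) (diagCLM γ) x := by
    have := (diagCLM γ).hasFDerivAt (x := x)
    rwa [show ⇑(diagCLM γ) = fun x => γ * x from funext (diagCLM_apply γ)] at this
  have h2 := (hd.clm_apply h1).fun_sub (hx.differentiableAt.hasFDerivAt.const_mul a)
  have h3 := hd.clm_apply (hasFDerivAt_const (Pi.single i (1 : ℂ) : Fin n → ℂ) x)
  rw [h2.fderiv, h3.fderiv]
  have h4 : diagCLM γ (Pi.single i 1) = γ i • (Pi.single i 1 : Fin n → ℂ) := by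
    rw [diagCLM_apply]
    ext j
    by_cases hj : j = i
    · subst hj; simp
    · simp [hj]
  simp [h4, hsymm.eq (γ * x)]
  ring

theorem iteratedPartial_euler_sub {f : (Fin n → ℂ) → ℂ} (hf : AnalyticAt ℂ f 0)
    (γ : Fin n → ℂ) (a : ℂ) (l : List (Fin n)) :
    iteratedPartial l (fun x => fderiv ℂ f x (γ * x) - a * f x) 0 =
      ((l.map γ).sum - a) * iteratedPartial l f 0 := by
  induction l generalizing f a with
  | nil => simp [iteratedPartial]
  | cons i l ih =>
    have h := (fderiv_euler_sub_apply_single hf γ a i).iteratedPartial l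
    have h' := h.self_of_nhds
    simp only [iteratedPartial]
    rw [h', ih (hf.fderiv_apply_const _)]
    rw [List.map_cons, List.sum_cons]
    ring

theorem iteratedFDeriv_apply_single {f : (Fin n → ℂ) → ℂ} (hf : AnalyticAt ℂ f 0) (k : ℕ)
    (v : Fin k → Fin n) : ∃ l, iteratedFDeriv ℂ k f 0 (fun m => Pi.single (v m) 1) =
      iteratedPartial l f 0 := by
  induction k generalizing f with
  | zero => exact ⟨[], by simp [iteratedPartial]⟩
  | succ k ih =>
    obtain ⟨l, hl⟩ := ih (hf.fderiv_apply_const (Pi.single (v (Fin.last k)) 1)) (Fin.init v)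
    refine ⟨v (Fin.last k) :: l, ?_⟩
    rw [iteratedPartial, ← hl, iteratedFDeriv_succ_apply_right]
    have := (ContinuousLinearMap.apply ℂ ℂ
      (Pi.single (v (Fin.last k)) 1 : Fin n → ℂ)).iteratedFDeriv_comp_left
      (hf.fderiv.contDiffAt (n := k)) le_rfl
    have h2 := congrArg (fun T => T fun m => Pi.single (Fin.init v m) 1) this
    exact h2.symm

/-- An analytic function all of whose iterated partial derivatives vanish at the origin is zero
near the origin. -/
theorem AnalyticAt.eventually_eq_zero_of_iteratedPartial {f : (Fin n → ℂ) → ℂ}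
    (hf : AnalyticAt ℂ f 0) (h : ∀ l, iteratedPartial l f 0 = 0) : ∀ᶠ x in 𝓝 0, f x = 0 := by
  obtain ⟨p, r, hp⟩ := hf
  have hz (k : ℕ) (y : Fin n → ℂ) : iteratedFDeriv ℂ k f 0 (fun _ => y) = 0 := by
    have : (iteratedFDeriv ℂ k f 0).toMultilinearMap = 0 := by
      refine Module.Basis.ext_multilinear (fun _ => Pi.basisFun ℂ (Fin n)) fun v => ?_
      obtain ⟨l, hl⟩ := iteratedFDeriv_apply_single hp.analyticAt k v
      simpa [Pi.basisFun_apply, h l] using hl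
    exact congrArg (fun T => T fun _ => y) this
  filter_upwards [Metric.eball_mem_nhds (0 : Fin n → ℂ) hp.r_pos] with y hy
  have := hp.hasSum_iteratedFDeriv hy
  simp only [hz, smul_zero, zero_add] at this
  exact this.unique hasSum_zero

/-- Relations satisfied by every monomial of weight `a` transfer weights from `γ` to `σ`. -/
theorem eventually_euler_eq_of_weights {f : (Fin n → ℂ) → ℂ} (hf : AnalyticAt ℂ f 0)
    {γ σ : Fin n → ℂ} {a b : ℂ} (h : ∀ᶠ x in 𝓝 0, fderiv ℂ f x (γ * x) = a * f x)
    (hw : ∀ l : List (Fin n), (l.map γ).sum = a → (l.map σ).sum = b ∨ iteratedPartial l f 0 = 0) :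
    ∀ᶠ x in 𝓝 0, fderiv ℂ f x (σ * x) = b * f x := by
  have han : AnalyticAt ℂ (fun x => fderiv ℂ f x (σ * x) - b * f x) 0 := by
    refine (hf.fderiv.fun_clm_apply ?_).sub (analyticAt_const.mul hf)
    have := (diagCLM σ).analyticAt 0
    rwa [show ⇑(diagCLM σ) = fun x => σ * x from funext (diagCLM_apply σ)] at this
  have hzero : ∀ l, iteratedPartial l (fun x => fderiv ℂ f x (γ * x) - a * f x) 0 = 0 := by
    intro l
    have h1 : (fun x => fderiv ℂ f x (γ * x) - a * f x) =ᶠ[𝓝 0] fun x => 0 * f x := by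
      filter_upwards [h] with x hx
      rw [hx, sub_self, zero_mul]
    have h2 : iteratedPartial l (fun x => (0 : ℂ)) (0 : Fin n → ℂ) = 0 := by
      induction l with
      | nil => rfl
      | cons i l ih => simpa [iteratedPartial] using ih
    have h3 := (h1.iteratedPartial l).self_of_nhds
    simpa [h2] using h3
  have hall : ∀ l, iteratedPartial l (fun x => fderiv ℂ f x (σ * x) - b * f x) 0 = 0 := by
    intro l
    rw [iteratedPartial_euler_sub hf]
    have h1 := hzero l
    rw [iteratedPartial_euler_sub hf, mul_eq_zero] at h1
    rcases h1 with h1 | h1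
    · rcases hw l (sub_eq_zero.1 h1) with h2 | h2
      · rw [h2, sub_self, zero_mul]
      · rw [h2, mul_zero]
    · rw [h1, mul_zero]
  filter_upwards [han.eventually_eq_zero_of_iteratedPartial hall] with x hx
  exact sub_eq_zero.1 hx

end PartialDerivatives

section Superposition

theorem ContinuousMap.update_apply_eq {ι K E : Type*} [TopologicalSpace K]
    [TopologicalSpace E] [DecidableEq ι] (c : ι → C(K, E)) (i : ι) (z : C(K, E)) (t : K) :
    (fun j => Function.update c i z j t) =
      Function.update (fun j => c j t) i (z t) := by
  ext j
  by_cases hj : j = i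
  · subst hj; simp
  · simp [hj]

variable {K E F : Type*} [TopologicalSpace K] [CompactSpace K] [NormedAddCommGroup E]
  [NormedSpace ℂ E] [NormedAddCommGroup F] [NormedSpace ℂ F]

/-- The pointwise action of a continuous multilinear map on continuous functions. -/
noncomputable def ContinuousMultilinearMap.onContinuousMap {ι : Type*} [Fintype ι]
    (p : ContinuousMultilinearMap ℂ (fun _ : ι => E) F) :
    ContinuousMultilinearMap ℂ (fun _ : ι => C(K, E)) C(K, F) :=
  MultilinearMap.mkContinuous
    { toFun := fun c => ⟨fun t => p fun i => c i t, by fun_prop⟩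
      map_update_add' := by
        intro _ c i x y
        ext t
        simp [ContinuousMap.update_apply_eq]
      map_update_smul' := by
        intro _ c i a x
        ext t
        simp [ContinuousMap.update_apply_eq] }
    ‖p‖ fun c => (ContinuousMap.norm_le _ (by positivity)).2 fun t =>
      (p.le_opNorm _).trans (by
        gcongr
        exact ContinuousMap.norm_coe_le_norm _ _)

theorem ContinuousMultilinearMap.norm_onContinuousMap_le {ι : Type*} [Fintype ι]
    (p : ContinuousMultilinearMap ℂ (fun _ : ι => E) F) :
    ‖(p.onContinuousMap : ContinuousMultilinearMap ℂ (fun _ : ι => C(K, E)) C(K, F))‖ ≤ ‖p‖ :=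
  MultilinearMap.mkContinuous_norm_le _ (norm_nonneg p) _

/-- Composition with a germ of an analytic map is an analytic operation on small continuous
functions, and its derivative is computed pointwise. -/
theorem AnalyticAt.exists_superposition [CompleteSpace F] {f : E → F} (hf : AnalyticAt ℂ f 0) :
    ∃ Θ : C(K, E) → C(K, F), AnalyticAt ℂ Θ 0 ∧ (∀ᶠ c in 𝓝 0, ∀ t, Θ c t = f (c t)) ∧
      ∀ᶠ c in 𝓝 0, ∀ w t, fderiv ℂ Θ c w t = fderiv ℂ f (c t) (w t) := by
  obtain ⟨p, R, hp⟩ := hf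
  let P : FormalMultilinearSeries ℂ C(K, E) C(K, F) := fun m => (p m).onContinuousMap
  have hP : p.radius ≤ P.radius :=
    FormalMultilinearSeries.radius_le_of_le fun m => (p m).norm_onContinuousMap_le
  have hR : 0 < P.radius := (hp.r_pos.trans_le hp.r_le).trans_le hP
  have hsum := P.hasFPowerSeriesOnBall hR
  have hsmall : ∀ᶠ c : C(K, E) in 𝓝 0, c ∈ Metric.eball (0 : C(K, E)) R :=
    Metric.eball_mem_nhds _ hp.r_pos
  have hpt : ∀ c ∈ Metric.eball (0 : C(K, E)) R, ∀ t, c t ∈ Metric.eball (0 : E) R := by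
    intro c hc t
    rw [Metric.mem_eball, edist_zero_right] at hc ⊢
    refine lt_of_le_of_lt ?_ hc
    exact enorm_le_iff_norm_le.2 (c.norm_coe_le_norm t)
  have heq : ∀ c ∈ Metric.eball (0 : C(K, E)) R, ∀ t, P.sum c t = f (c t) := by
    intro c hc t
    have h1 : HasSum (fun m => P m fun _ => c) (P.sum c) :=
      P.hasSum (Metric.eball_subset_eball (hp.r_le.trans hP) hc)
    have h2 := h1.mapL (ContinuousMap.evalCLM ℂ t)
    have h3 := hp.hasSum (hpt c hc t)
    rw [zero_add] at h3
    exact h2.unique h3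
  have hdf : ∀ c ∈ Metric.eball (0 : C(K, E)) R, ∀ t, DifferentiableAt ℂ f (c t) := by
    intro c hc t
    exact hp.differentiableOn.differentiableAt (Metric.isOpen_eball.mem_nhds (hpt c hc t))
  refine ⟨P.sum, hsum.analyticAt, ?_, ?_⟩
  · filter_upwards [hsmall] with c hc using heq c hc
  · filter_upwards [hsmall, hsum.analyticAt.eventually_analyticAt] with c hc hc' w t
    have h1 := ((ContinuousMap.evalCLM ℂ t : C(K, F) →L[ℂ] F).hasFDerivAt
      (x := P.sum c)).comp c hc'.differentiableAt.hasFDerivAt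
    have h2 := (hdf c hc t).hasFDerivAt.comp c
      (ContinuousMap.evalCLM ℂ t : C(K, E) →L[ℂ] E).hasFDerivAt
    have h3 := h2.congr_of_eventuallyEq (f₁ := (ContinuousMap.evalCLM ℂ t) ∘ P.sum) (by
      filter_upwards [Metric.isOpen_eball.mem_nhds hc] with c' hc' using heq c' hc' t)
    exact DFunLike.congr_fun (h1.unique h3) w

end Superposition

section VariationOfConstants

open MeasureTheory

variable {n : ℕ}

/-- The interval of one period. -/
abbrev PeriodInterval : Set ℝ := Icc 0 (2 * Real.pi)

/-- The integral curve of the diagonal linear field of weights `w` starting at `1 : ℂⁿ`. -/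
noncomputable def expCurve (w : Fin n → ℂ) (t : ℝ) : Fin n → ℂ :=
  fun j => Complex.exp (t * w j)

theorem expCurve_zero (w : Fin n → ℂ) : expCurve w 0 = 1 := by
  ext j
  simp [expCurve]

theorem expCurve_add (w : Fin n → ℂ) (s t : ℝ) :
    expCurve w (s + t) = expCurve w s * expCurve w t := by
  ext j
  simp [expCurve, add_mul, Complex.exp_add]

theorem expCurve_neg_mul (w : Fin n → ℂ) (t : ℝ) : expCurve w (-t) * expCurve w t = 1 := by
  rw [← expCurve_add, neg_add_cancel, expCurve_zero]

@[fun_prop]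
theorem continuous_expCurve (w : Fin n → ℂ) : Continuous (expCurve w) := by
  unfold expCurve
  fun_prop

theorem hasDerivAt_expCurve (w : Fin n → ℂ) (t : ℝ) :
    HasDerivAt (expCurve w) (w * expCurve w t) t := by
  refine hasDerivAt_pi.2 fun j => ?_
  have h1 : HasDerivAt (fun t : ℝ => Complex.exp (t * w j)) (Complex.exp (t * w j) * (1 * w j)) t :=
    ((Complex.ofRealCLM.hasDerivAt (x := t)).mul_const _).cexp
  refine h1.congr_deriv ?_
  simp only [expCurve, Pi.mul_apply]
  ring

theorem hasDerivAt_expCurve_neg (w : Fin n → ℂ) (t : ℝ) :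
    HasDerivAt (fun t => expCurve w (-t)) (-(w * expCurve w (-t))) t := by
  exact ((hasDerivAt_expCurve w (-t)).scomp t (hasDerivAt_neg t)).congr_deriv (by simp)

/-- Variation of constants: the inhomogeneous linear equation has the expected solution. -/
theorem hasDerivAt_expCurve_mul_integral (w x : Fin n → ℂ) {g : ℝ → Fin n → ℂ}
    (hg : Continuous g) (t : ℝ) :
    HasDerivAt (fun t => expCurve w t * (x + ∫ s in (0 : ℝ)..t, expCurve w (-s) * g s))
      (w * (expCurve w t * (x + ∫ s in (0 : ℝ)..t, expCurve w (-s) * g s)) + g t) t := by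
  have h1 : HasDerivAt (fun t => ∫ s in (0 : ℝ)..t, expCurve w (-s) * g s)
      (expCurve w (-t) * g t) t := by
    have hc : Continuous fun s => expCurve w (-s) * g s := by fun_prop
    exact hc.integral_hasStrictDerivAt 0 t |>.hasDerivAt
  refine ((hasDerivAt_expCurve w t).mul (h1.const_add x)).congr_deriv ?_
  linear_combination g t * expCurve_neg_mul w t

/-- Variation of constants: solutions of the inhomogeneous linear equation are unique. -/
theorem eq_expCurve_mul_integral {w : Fin n → ℂ} {g u : ℝ → Fin n → ℂ}
    (hg : Continuous g) {T : ℝ} (hT : 0 ≤ T)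
    (hu : ∀ t ∈ Icc 0 T, HasDerivWithinAt u (w * u t + g t) (Icc 0 T) t) :
    u T = expCurve w T * (u 0 + ∫ s in (0 : ℝ)..T, expCurve w (-s) * g s) := by
  have h1 : ∀ t ∈ Icc 0 T, HasDerivWithinAt (fun t => expCurve w (-t) * u t)
      (expCurve w (-t) * g t) (Icc 0 T) t := by
    intro t ht
    refine ((hasDerivAt_expCurve_neg w t).hasDerivWithinAt.mul (hu t ht)).congr_deriv ?_
    ring
  have hc : Continuous fun s => expCurve w (-s) * g s := by fun_prop
  rw [intervalIntegral.integral_eq_sub_of_hasDerivAt_of_le hT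
    (fun t ht => (h1 t ht).continuousWithinAt)
    (fun t ht => (h1 t ⟨ht.1.le, ht.2.le⟩).hasDerivAt (Icc_mem_nhds ht.1 ht.2))
    (hc.intervalIntegrable _ _), neg_zero, expCurve_zero]
  linear_combination -u T * expCurve_neg_mul w T

theorem two_pi_nonneg : (0 : ℝ) ≤ 2 * Real.pi := by positivity

/-- Integration from the left endpoint, as an operator on continuous functions. -/
noncomputable def primitiveCLM :
    C(PeriodInterval, Fin n → ℂ) →L[ℂ] C(PeriodInterval, Fin n → ℂ) :=
  LinearMap.mkContinuous
    { toFun := fun g => ⟨fun t => ∫ s in (0 : ℝ)..t, IccExtend two_pi_nonneg g s,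
        (intervalIntegral.continuous_primitive (fun a b =>
          (g.continuous.Icc_extend' (h := two_pi_nonneg)).intervalIntegrable a b) 0).comp
          continuous_subtype_val⟩
      map_add' := by
        intro f g
        ext1 t
        exact intervalIntegral.integral_add
          ((f.continuous.Icc_extend' (h := two_pi_nonneg)).intervalIntegrable _ _)
          ((g.continuous.Icc_extend' (h := two_pi_nonneg)).intervalIntegrable _ _)
      map_smul' := by
        intro a f
        ext1 t
        exact intervalIntegral.integral_smul a _ }
    (2 * Real.pi) fun g => (ContinuousMap.norm_le _ (by positivity)).2 fun t => by
      refine (intervalIntegral.norm_integral_le_of_norm_le_const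
        fun s _ => g.norm_coe_le_norm _).trans ?_
      rw [sub_zero, abs_of_nonneg t.2.1, mul_comm]
      exact mul_le_mul_of_nonneg_right t.2.2 (norm_nonneg _)

/-- The solution of the linear equation of weights `w` with source `g` and vanishing initial value. -/
noncomputable def duhamelCLM (w : Fin n → ℂ) :
    C(PeriodInterval, Fin n → ℂ) →L[ℂ] C(PeriodInterval, Fin n → ℂ) :=
  ContinuousLinearMap.mul ℂ _ ⟨fun t : PeriodInterval => expCurve w t, by fun_prop⟩ ∘L
    primitiveCLM ∘L
      ContinuousLinearMap.mul ℂ _ ⟨fun t : PeriodInterval => expCurve w (-t), by fun_prop⟩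

/-- The solution of the linear equation of weights `w` with prescribed initial value. -/
noncomputable def linearFlowCLM (w : Fin n → ℂ) :
    (Fin n → ℂ) →L[ℂ] C(PeriodInterval, Fin n → ℂ) :=
  ContinuousLinearMap.mul ℂ _ ⟨fun t : PeriodInterval => expCurve w t, by fun_prop⟩ ∘L
    ContinuousLinearMap.const ℂ PeriodInterval

theorem linearFlowCLM_apply (w x : Fin n → ℂ) (t : PeriodInterval) :
    linearFlowCLM w x t = expCurve w t * x :=
  rfl

theorem duhamelCLM_apply (w : Fin n → ℂ) (g : C(PeriodInterval, Fin n → ℂ))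
    (t : PeriodInterval) :
    duhamelCLM w g t = expCurve w t *
      ∫ s in (0 : ℝ)..t, expCurve w (-s) * IccExtend two_pi_nonneg g s := by
  refine congrArg (expCurve w t * ·) (intervalIntegral.integral_congr fun s hs => ?_)
  rw [uIcc_of_le t.2.1] at hs
  have hs' : s ∈ PeriodInterval := ⟨hs.1, hs.2.trans t.2.2⟩
  rw [IccExtend_of_mem _ _ hs', IccExtend_of_mem _ _ hs']
  rfl

theorem eventually_forall_continuousMap_apply {K E : Type*} [TopologicalSpace K] [CompactSpace K]
    [NormedAddCommGroup E] {p : E → Prop} (hp : ∀ᶠ y in 𝓝 0, p y) :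
    ∀ᶠ c : C(K, E) in 𝓝 0, ∀ t, p (c t) := by
  obtain ⟨ε, hε, hball⟩ := Metric.eventually_nhds_iff_ball.1 hp
  filter_upwards [Metric.ball_mem_nhds (0 : C(K, E)) hε] with c hc t
  refine hball _ ?_
  rw [mem_ball_zero_iff] at hc ⊢
  exact (c.norm_coe_le_norm t).trans_lt hc

/-- The flow of an analytic vector field near an equilibrium, over a fixed time interval, is an
analytic map into the space of curves. A field commuting with the given one is transported by
the derivative of the flow. -/
theorem exists_flow {W : (Fin n → ℂ) → Fin n → ℂ} (hW : AnalyticAt ℂ W 0) (hW0 : W 0 = 0)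
    {w : Fin n → ℂ} (hWd : fderiv ℂ W 0 = diagCLM w) :
    ∃ Φ : (Fin n → ℂ) → C(PeriodInterval, Fin n → ℂ), AnalyticAt ℂ Φ 0 ∧ Φ 0 = 0 ∧
      fderiv ℂ Φ 0 = linearFlowCLM w ∧
      (∀ᶠ x in 𝓝 0, IccExtend two_pi_nonneg (Φ x) 0 = x ∧
        ∀ t ∈ PeriodInterval, HasDerivWithinAt (IccExtend two_pi_nonneg (Φ x))
          (W (IccExtend two_pi_nonneg (Φ x) t)) PeriodInterval t) ∧
      ∀ Z : (Fin n → ℂ) → Fin n → ℂ, AnalyticAt ℂ Z 0 →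
        (∀ᶠ y in 𝓝 0, fderiv ℂ W y (Z y) = fderiv ℂ Z y (W y)) →
        ∀ᶠ x in 𝓝 0, ∀ t, fderiv ℂ Φ x (Z x) t = Z (Φ x t) := by
  let R : (Fin n → ℂ) → Fin n → ℂ := fun y => W y - diagCLM w y
  have hR : AnalyticAt ℂ R 0 := hW.sub ((diagCLM w).analyticAt 0)
  have hRd : ∀ y, AnalyticAt ℂ W y → fderiv ℂ R y = fderiv ℂ W y - diagCLM w := by
    intro y hy
    exact (hy.differentiableAt.hasFDerivAt.sub (diagCLM w).hasFDerivAt).fderiv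
  obtain ⟨Θ, hΘ, hΘR, hΘd⟩ := hR.exists_superposition (K := PeriodInterval)
  let G : C(PeriodInterval, Fin n → ℂ) → C(PeriodInterval, Fin n → ℂ) :=
    fun c => c - duhamelCLM w (Θ c)
  have hG : AnalyticAt ℂ G 0 := analyticAt_id.sub (((duhamelCLM w).analyticAt _).comp hΘ)
  have hGd : ∀ c, AnalyticAt ℂ Θ c →
      fderiv ℂ G c = ContinuousLinearMap.id ℂ _ - duhamelCLM w ∘L fderiv ℂ Θ c := by
    intro c hc
    exact ((hasFDerivAt_id c).sub
      ((duhamelCLM w).hasFDerivAt.comp c hc.differentiableAt.hasFDerivAt)).fderiv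
  have hΘ0 : Θ 0 = 0 := by
    ext1 t
    rw [hΘR.self_of_nhds t]
    simp [R, hW0]
  have hG0 : G 0 = 0 := by simp [G, hΘ0]
  have hGd0 : fderiv ℂ G 0 = ContinuousLinearMap.id ℂ _ := by
    have : fderiv ℂ Θ 0 = 0 := by
      ext1 v
      ext1 t
      rw [hΘd.self_of_nhds v t]
      simp [hRd 0 hW, hWd]
    rw [hGd 0 hΘ, this, ContinuousLinearMap.comp_zero, sub_zero]
  obtain ⟨Ψ, hΨ, hΨ0, hΨd, hΨG, hGΨ⟩ := exists_analyticAt_localInverse hG hG0 hGd0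
  let B := linearFlowCLM w
  have hΨB : AnalyticAt ℂ Ψ (B 0) := by rwa [map_zero]
  have hΦ : AnalyticAt ℂ (fun x => Ψ (B x)) 0 := hΨB.comp (B.analyticAt 0)
  have hΦ0 : Ψ (B 0) = 0 := by rw [map_zero, hΨ0]
  have hBt : Tendsto B (𝓝 0) (𝓝 0) := by
    simpa using B.continuous.tendsto 0
  have hΦt : Tendsto (fun x => Ψ (B x)) (𝓝 0) (𝓝 0) := by
    simpa only [ContinuousAt, hΦ0] using hΦ.continuousAt
  have hsol : ∀ᶠ x in 𝓝 0, IccExtend two_pi_nonneg (Ψ (B x)) 0 = x ∧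
      ∀ t ∈ PeriodInterval, HasDerivWithinAt (IccExtend two_pi_nonneg (Ψ (B x)))
        (W (IccExtend two_pi_nonneg (Ψ (B x)) t)) PeriodInterval t := by
    filter_upwards [hBt.eventually hGΨ, hΦt.eventually hΘR] with x hx hxR
    set c := Ψ (B x)
    have hgc : Continuous (IccExtend two_pi_nonneg (Θ c)) := (Θ c).continuous.Icc_extend'
    have hc : ∀ t ∈ PeriodInterval, IccExtend two_pi_nonneg c t = expCurve w t *
        (x + ∫ s in (0 : ℝ)..t, expCurve w (-s) * IccExtend two_pi_nonneg (Θ c) s) := by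
      intro t ht
      have h1 : c - duhamelCLM w (Θ c) = B x := hx
      have h2 := DFunLike.congr_fun h1 ⟨t, ht⟩
      rw [ContinuousMap.sub_apply, duhamelCLM_apply, linearFlowCLM_apply, sub_eq_iff_eq_add] at h2
      rw [IccExtend_of_mem _ _ ht, h2, mul_add]
    refine ⟨?_, fun t ht => ?_⟩
    · rw [hc 0 ⟨le_rfl, two_pi_nonneg⟩, expCurve_zero]
      simp
    · have h1 := (hasDerivAt_expCurve_mul_integral w x hgc t).hasDerivWithinAt
        (s := PeriodInterval)
      refine (h1.congr hc (hc t ht)).congr_deriv ?_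
      rw [← hc t ht, IccExtend_of_mem _ _ ht, IccExtend_of_mem _ _ ht, hxR ⟨t, ht⟩]
      simp [R, diagCLM_apply]
  refine ⟨fun x => Ψ (B x), hΦ, hΦ0, ?_, hsol, ?_⟩
  · have := hΨB.differentiableAt.hasFDerivAt.comp (0 : Fin n → ℂ) B.hasFDerivAt
    rw [map_zero, hΨd] at this
    exact this.fderiv
  · intro Z hZ hcomm
    have hpt := eventually_forall_continuousMap_apply (K := PeriodInterval)
      ((hZ.eventually_analyticAt.and hW.eventually_analyticAt).and hcomm)
    filter_upwards [hsol, hΦt.eventually hpt, hBt.eventually hGΨ, hΦt.eventually hΘd,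
      hΦt.eventually hΘ.eventually_analyticAt, hBt.eventually hΨ.eventually_analyticAt,
      hΦt.eventually hΨG.eventually_nhds]
      with x ⟨hx0, hxd⟩ hxp hGx hxΘ hxan hxΨ hinv
    set c := Ψ (B x)
    let z : C(PeriodInterval, Fin n → ℂ) := ⟨fun t => Z (c t), continuous_iff_continuousAt.2
      fun t => (hxp t).1.1.continuousAt.comp c.continuous.continuousAt⟩
    have hzd : ∀ t ∈ PeriodInterval, HasDerivWithinAt (IccExtend two_pi_nonneg z)
        (w * IccExtend two_pi_nonneg z t +
          IccExtend two_pi_nonneg (fderiv ℂ Θ c z) t) PeriodInterval t := by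
      intro t ht
      have hct : IccExtend two_pi_nonneg c t = c ⟨t, ht⟩ := IccExtend_of_mem _ _ ht
      obtain ⟨⟨hZa, hWa⟩, hcm⟩ := hxp ⟨t, ht⟩
      have h1 : HasFDerivAt Z ((fderiv ℂ Z (c ⟨t, ht⟩)).restrictScalars ℝ)
          (IccExtend two_pi_nonneg c t) := by
        rw [hct]
        exact hZa.differentiableAt.hasFDerivAt.restrictScalars ℝ
      have h2 := h1.comp_hasDerivWithinAt t (hxd t ht)
      have h3 : Z ∘ IccExtend two_pi_nonneg c = IccExtend two_pi_nonneg z := rfl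
      rw [h3] at h2
      refine h2.congr_deriv ?_
      rw [hct, IccExtend_of_mem _ _ ht, IccExtend_of_mem _ _ ht, hxΘ z ⟨t, ht⟩, hRd _ hWa,
        sub_apply, diagCLM_apply]
      show fderiv ℂ Z (c ⟨t, ht⟩) (W (c ⟨t, ht⟩)) = w * Z (c ⟨t, ht⟩) +
        (fderiv ℂ W (c ⟨t, ht⟩) (Z (c ⟨t, ht⟩)) - w * Z (c ⟨t, ht⟩))
      rw [hcm]
      ring
    have hGz : fderiv ℂ G c z = B (Z x) := by
      rw [hGd c hxan]
      ext1 t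
      have h1 := eq_expCurve_mul_integral (w := w)
        ((fderiv ℂ Θ c z).continuous.Icc_extend' (h := two_pi_nonneg)) t.2.1
        (fun s hs => (hzd s ⟨hs.1, hs.2.trans t.2.2⟩).mono (Icc_subset_Icc_right t.2.2))
      have h2 : IccExtend two_pi_nonneg z 0 = Z x := by
        have : IccExtend two_pi_nonneg z 0 = Z (IccExtend two_pi_nonneg c 0) := rfl
        rw [this, hx0]
      rw [IccExtend_of_mem _ _ t.2, h2] at h1
      show z t - duhamelCLM w (fderiv ℂ Θ c z) t = linearFlowCLM w (Z x) t
      rw [duhamelCLM_apply, linearFlowCLM_apply, sub_eq_iff_eq_add, ← mul_add]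
      exact h1
    have hGa : DifferentiableAt ℂ G c :=
      differentiableAt_id.sub ((duhamelCLM w).differentiableAt.comp c hxan.differentiableAt)
    have hΨGd : fderiv ℂ Ψ (B x) ∘L fderiv ℂ G c = ContinuousLinearMap.id ℂ _ := by
      have h1 : HasFDerivAt Ψ (fderiv ℂ Ψ (B x)) (G c) := by
        rw [hGx]
        exact hxΨ.differentiableAt.hasFDerivAt
      exact (h1.comp c hGa.hasFDerivAt).unique ((hasFDerivAt_id c).congr_of_eventuallyEq hinv)
    have hΦd : fderiv ℂ (fun x => Ψ (B x)) x = fderiv ℂ Ψ (B x) ∘L B :=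
      (hxΨ.differentiableAt.hasFDerivAt.comp x B.hasFDerivAt).fderiv
    intro t
    rw [hΦd, ContinuousLinearMap.comp_apply, ← hGz, ← ContinuousLinearMap.comp_apply, hΨGd]
    rfl

/-- Two integral curves of an analytic vector field with the same initial value coincide. -/
theorem AnalyticOnNhd.integralCurve_unique {E : Type*} [NormedAddCommGroup E] [NormedSpace ℂ E]
    [CompleteSpace E] {U : Set E} {W : E → E} (hW : AnalyticOnNhd ℂ W U) {a b : ℝ}
    {c₁ c₂ : ℝ → E} (h₁ : ∀ t ∈ Icc a b, c₁ t ∈ U) (h₂ : ∀ t ∈ Icc a b, c₂ t ∈ U)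
    (hd₁ : ∀ t ∈ Icc a b, HasDerivWithinAt c₁ (W (c₁ t)) (Icc a b) t)
    (hd₂ : ∀ t ∈ Icc a b, HasDerivWithinAt c₂ (W (c₂ t)) (Icc a b) t) (ha : c₁ a = c₂ a) :
    EqOn c₁ c₂ (Icc a b) := by
  have hc₁ : ContinuousOn c₁ (Icc a b) := fun t ht => (hd₁ t ht).continuousWithinAt
  have hc₂ : ContinuousOn c₂ (Icc a b) := fun t ht => (hd₂ t ht).continuousWithinAt
  let S : Set E := c₁ '' Icc a b ∪ c₂ '' Icc a b
  have hS : IsCompact S := (isCompact_Icc.image_of_continuousOn hc₁).union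
    (isCompact_Icc.image_of_continuousOn hc₂)
  have hSU : S ⊆ U := union_subset (image_subset_iff.2 h₁) (image_subset_iff.2 h₂)
  have hlip : LocallyLipschitzOn S W := by
    intro x hx
    obtain ⟨C, s, hs, hC⟩ := ((hW x (hSU hx)).contDiffAt (n := 1)).exists_lipschitzOnWith
    exact ⟨C, s, mem_nhdsWithin_of_mem_nhds hs, hC⟩
  obtain ⟨C, hC⟩ := hlip.exists_lipschitzOnWith_of_compact hS
  have hmono : ∀ t ∈ Ico a b, ∀ c : ℝ → E, HasDerivWithinAt c (W (c t)) (Icc a b) t →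
      HasDerivWithinAt c (W (c t)) (Ici t) t := fun t ht c hc =>
    hc.mono_of_mem_nhdsWithin
      (mem_of_superset (Icc_mem_nhdsGE ht.2) (Icc_subset_Icc_left ht.1))
  exact ODE_solution_unique_of_mem_Icc_right (v := fun _ => W) (s := fun _ => S) (fun _ _ => hC)
    hc₁ (fun t ht => hmono t ht c₁ (hd₁ t (Ico_subset_Icc_self ht)))
    (fun t ht => Or.inl (mem_image_of_mem _ (Ico_subset_Icc_self ht)))
    hc₂ (fun t ht => hmono t ht c₂ (hd₂ t (Ico_subset_Icc_self ht)))
    (fun t ht => Or.inr (mem_image_of_mem _ (Ico_subset_Icc_self ht))) ha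

theorem expCurve_two_pi (ρ : Fin n → ℤ) :
    expCurve (fun j => Complex.I * ρ j) (2 * Real.pi) = 1 := by
  ext j
  have : ((2 * Real.pi : ℝ) : ℂ) * (Complex.I * ρ j) = ρ j * (2 * Real.pi * Complex.I) := by
    push_cast; ring
  simp only [expCurve, this, Complex.exp_int_mul_two_pi_mul_I, Pi.one_apply]

/-- The weighted mean over one period, extracting the component of weight `w`. -/
noncomputable def weightedMeanCLM (w : Fin n → ℂ) :
    C(PeriodInterval, Fin n → ℂ) →L[ℂ] Fin n → ℂ :=
  ((2 * Real.pi : ℝ) : ℂ)⁻¹ • (ContinuousMap.evalCLM ℂ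
    (⟨2 * Real.pi, two_pi_nonneg, le_rfl⟩ : PeriodInterval) ∘L duhamelCLM w)

theorem weightedMeanCLM_apply (w : Fin n → ℂ) (g : C(PeriodInterval, Fin n → ℂ)) :
    weightedMeanCLM w g = ((2 * Real.pi : ℝ) : ℂ)⁻¹ • (expCurve w (2 * Real.pi) *
      ∫ s in (0 : ℝ)..2 * Real.pi, expCurve w (-s) * IccExtend two_pi_nonneg g s) :=
  congrArg (fun x : Fin n → ℂ => ((2 * Real.pi : ℝ) : ℂ)⁻¹ • x)
    (duhamelCLM_apply w g ⟨2 * Real.pi, two_pi_nonneg, le_rfl⟩)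

theorem weightedMeanCLM_linearFlowCLM (ρ : Fin n → ℤ) (v : Fin n → ℂ) :
    weightedMeanCLM (fun j => Complex.I * ρ j) (linearFlowCLM (fun j => Complex.I * ρ j) v) =
      v := by
  have h1 : ∫ s in (0 : ℝ)..2 * Real.pi, expCurve (fun j => Complex.I * ρ j) (-s) *
      IccExtend two_pi_nonneg (linearFlowCLM (fun j => Complex.I * ρ j) v) s =
      ∫ s in (0 : ℝ)..2 * Real.pi, v := by
    refine intervalIntegral.integral_congr fun s hs => ?_
    rw [uIcc_of_le two_pi_nonneg] at hs
    rw [IccExtend_of_mem _ _ hs, linearFlowCLM_apply, ← mul_assoc, expCurve_neg_mul, one_mul]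
  rw [weightedMeanCLM_apply, h1, expCurve_two_pi, one_mul, intervalIntegral.integral_const,
    sub_zero, ← Complex.coe_smul, smul_smul, inv_mul_cancel₀, one_smul]
  exact_mod_cast Real.two_pi_pos.ne'

theorem weightedMeanCLM_const_mul (w σ : Fin n → ℂ) (g : C(PeriodInterval, Fin n → ℂ)) :
    weightedMeanCLM w (ContinuousMap.const _ σ * g) = σ * weightedMeanCLM w g := by
  have h1 (s : ℝ) : expCurve w (-s) * IccExtend two_pi_nonneg
      (ContinuousMap.const PeriodInterval σ * g : C(PeriodInterval, Fin n → ℂ)) s =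
      σ * (expCurve w (-s) * IccExtend two_pi_nonneg g s) :=
    mul_left_comm _ _ _
  have h2 := (ContinuousLinearMap.mul ℝ (Fin n → ℂ) σ).intervalIntegral_comp_comm
    (μ := volume) (a := 0) (b := 2 * Real.pi)
    (f := fun s => expCurve w (-s) * IccExtend two_pi_nonneg g s)
    (Continuous.intervalIntegrable (by
      have := g.continuous.Icc_extend' (h := two_pi_nonneg)
      fun_prop) _ _)
  simp only [ContinuousLinearMap.mul_apply'] at h2
  rw [weightedMeanCLM_apply, weightedMeanCLM_apply]
  simp only [h1]
  rw [h2, mul_smul_comm, mul_left_comm]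

/-- Averaging a map over the periodic flow of `V` linearizes `V` and preserves the
linearization of every field commuting with `V`. -/
theorem exists_averaging {U : Set (Fin n → ℂ)} (hUo : IsOpen U) (h0U : (0 : Fin n → ℂ) ∈ U)
    {V : (Fin n → ℂ) → Fin n → ℂ} (hV : AnalyticOnNhd ℂ V U) (hV0 : V 0 = 0) {ρ : Fin n → ℤ}
    (hVd : fderiv ℂ V 0 = diagCLM fun j => (ρ j : ℂ))
    (hper : ∀ x ∈ U, ∃ c : ℝ → (Fin n → ℂ), (∀ t, c t ∈ U) ∧ c 0 = x ∧
      (∀ t : ℝ, HasDerivAt c (Complex.I • V (c t)) t) ∧ ∀ t : ℝ, c (t + 2 * Real.pi) = c t)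
    {h : (Fin n → ℂ) → Fin n → ℂ} (hh : AnalyticAt ℂ h 0) (hh0 : h 0 = 0)
    (hhd : fderiv ℂ h 0 = ContinuousLinearMap.id ℂ _) :
    ∃ k : (Fin n → ℂ) → Fin n → ℂ, AnalyticAt ℂ k 0 ∧ k 0 = 0 ∧
      fderiv ℂ k 0 = ContinuousLinearMap.id ℂ _ ∧
      (∀ᶠ x in 𝓝 0, fderiv ℂ k x (V x) = diagCLM (fun j => (ρ j : ℂ)) (k x)) ∧
      ∀ Z : (Fin n → ℂ) → Fin n → ℂ, AnalyticAt ℂ Z 0 →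
        (∀ᶠ y in 𝓝 0, fderiv ℂ V y (Z y) = fderiv ℂ Z y (V y)) → ∀ σ : Fin n → ℂ,
        (∀ᶠ x in 𝓝 0, fderiv ℂ h x (Z x) = diagCLM σ (h x)) →
        ∀ᶠ x in 𝓝 0, fderiv ℂ k x (Z x) = diagCLM σ (k x) := by
  let w : Fin n → ℂ := fun j => Complex.I * ρ j
  let W : (Fin n → ℂ) → Fin n → ℂ := fun y => Complex.I • V y
  have hW : AnalyticOnNhd ℂ W U := fun y hy => (hV y hy).const_smul (c := Complex.I)
  have hWd : ∀ y ∈ U, fderiv ℂ W y = Complex.I • fderiv ℂ V y := fun y hy =>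
    ((hV y hy).differentiableAt.hasFDerivAt.const_smul Complex.I).fderiv
  have hW0d : fderiv ℂ W 0 = diagCLM w := by
    rw [hWd 0 h0U, hVd]
    ext x j
    simp only [w, smul_apply, diagCLM_apply, Pi.smul_apply, Pi.mul_apply, smul_eq_mul]
    ring
  obtain ⟨Φ, hΦ, hΦ0, hΦd, hsol, htrans⟩ := exists_flow (hW 0 h0U) (by simp [W, hV0]) hW0d
  obtain ⟨Θ, hΘ, hΘh, hΘd⟩ := hh.exists_superposition (K := PeriodInterval)
  have hΦt : Tendsto Φ (𝓝 0) (𝓝 0) := by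
    simpa only [ContinuousAt, hΦ0] using hΦ.continuousAt
  let A := weightedMeanCLM w
  have hΘ' : AnalyticAt ℂ Θ (Φ 0) := by rwa [hΦ0]
  have hΘ0 : Θ 0 = 0 := by
    ext1 t
    rw [hΘh.self_of_nhds t]
    exact hh0
  have hkd : ∀ x, AnalyticAt ℂ Φ x → AnalyticAt ℂ Θ (Φ x) → ∀ v,
      fderiv ℂ (fun x => A (Θ (Φ x))) x v = A (fderiv ℂ Θ (Φ x) (fderiv ℂ Φ x v)) := by
    intro x h1 h2 v
    exact DFunLike.congr_fun (A.hasFDerivAt.comp x (h2.differentiableAt.hasFDerivAt.comp x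
      h1.differentiableAt.hasFDerivAt)).fderiv v
  have htrans' : ∀ Z : (Fin n → ℂ) → Fin n → ℂ, AnalyticAt ℂ Z 0 →
      (∀ᶠ y in 𝓝 0, fderiv ℂ V y (Z y) = fderiv ℂ Z y (V y)) →
      ∀ᶠ x in 𝓝 0, ∀ t, fderiv ℂ Φ x (Z x) t = Z (Φ x t) := by
    intro Z hZ hcomm
    refine htrans Z hZ ?_
    filter_upwards [hcomm, hUo.mem_nhds h0U] with y hy hyU
    rw [hWd y hyU, smul_apply, hy, map_smul]
  refine ⟨fun x => A (Θ (Φ x)), (A.analyticAt _).comp (hΘ'.comp hΦ), ?_, ?_, ?_, ?_⟩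
  · simp [hΦ0, hΘ0]
  · ext1 v
    rw [hkd 0 hΦ hΘ', hΦ0, hΦd]
    have : fderiv ℂ Θ 0 (linearFlowCLM w v) = linearFlowCLM w v := by
      ext1 t
      rw [hΘd.self_of_nhds, ContinuousMap.zero_apply, hhd]
      rfl
    rw [this]
    exact weightedMeanCLM_linearFlowCLM ρ v
  · filter_upwards [hsol, htrans' V (hV 0 h0U) (Eventually.of_forall fun _ => rfl),
      hΦ.eventually_analyticAt, hΦt.eventually hΘ.eventually_analyticAt, hΦt.eventually hΘh,
      hΦt.eventually hΘd, hΦt.eventually (eventually_forall_continuousMap_apply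
        (hh.eventually_analyticAt.and (hUo.mem_nhds h0U))), hUo.mem_nhds h0U]
      with x ⟨hx0, hxd⟩ hxt hΦx hΘx hxΘ hxΘd hxp hxU
    rw [hkd x hΦx hΘx]
    set c := Φ x
    set p := fderiv ℂ Θ c (fderiv ℂ Φ x (V x))
    have hclosed : IccExtend two_pi_nonneg c (2 * Real.pi) = x := by
      obtain ⟨c₁, hc₁U, hc₁0, hc₁d, hc₁p⟩ := hper x hxU
      have : EqOn c₁ (IccExtend two_pi_nonneg c) PeriodInterval :=
        hW.integralCurve_unique (fun t _ => hc₁U t) (fun t _ => (hxp _).2)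
        (fun t _ => (hc₁d t).hasDerivWithinAt) hxd (hc₁0.trans hx0.symm)
      have hend := hc₁p 0
      rw [zero_add, hc₁0] at hend
      rw [← this ⟨two_pi_nonneg, le_rfl⟩, hend]
    let g : C(PeriodInterval, Fin n → ℂ) := Complex.I • p - ContinuousMap.const _ w * Θ c
    have hu : ∀ t ∈ PeriodInterval, HasDerivWithinAt (fun t => h (IccExtend two_pi_nonneg c t))
        (w * h (IccExtend two_pi_nonneg c t) + IccExtend two_pi_nonneg g t)
        PeriodInterval t := by
      intro t ht
      have hct : IccExtend two_pi_nonneg c t = c ⟨t, ht⟩ := IccExtend_of_mem _ _ ht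
      have h1 : HasFDerivAt h ((fderiv ℂ h (c ⟨t, ht⟩)).restrictScalars ℝ)
          (IccExtend two_pi_nonneg c t) := by
        rw [hct]
        exact (hxp ⟨t, ht⟩).1.differentiableAt.hasFDerivAt.restrictScalars ℝ
      refine (h1.comp_hasDerivWithinAt t (hxd t ht)).congr_deriv ?_
      rw [hct, IccExtend_of_mem _ _ ht]
      show fderiv ℂ h (c ⟨t, ht⟩) (Complex.I • V (c ⟨t, ht⟩)) =
        w * h (c ⟨t, ht⟩) + (Complex.I • p ⟨t, ht⟩ - w * Θ c ⟨t, ht⟩)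
      rw [hxΘ, hxΘd, hxt, map_smul]
      ring
    have h1 := eq_expCurve_mul_integral (g.continuous.Icc_extend' (h := two_pi_nonneg))
      two_pi_nonneg hu
    have h2 : A g = 0 := by
      rw [expCurve_two_pi, one_mul, hclosed, hx0, left_eq_add] at h1
      rw [weightedMeanCLM_apply, h1, mul_zero, smul_zero]
    have h3 : Complex.I • A p = w * A (Θ c) := by
      rw [map_sub, map_smul, weightedMeanCLM_const_mul, sub_eq_zero] at h2
      exact h2
    have h4 : w * A (Θ c) = Complex.I • diagCLM (fun j => (ρ j : ℂ)) (A (Θ c)) := by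
      ext j
      simp only [w, diagCLM_apply, Pi.smul_apply, Pi.mul_apply, smul_eq_mul]
      ring
    exact smul_right_injective _ Complex.I_ne_zero (h3.trans h4)
  · intro Z hZ hcomm σ hσ
    filter_upwards [htrans' Z hZ hcomm, hΦ.eventually_analyticAt,
      hΦt.eventually hΘ.eventually_analyticAt, hΦt.eventually hΘh, hΦt.eventually hΘd,
      hΦt.eventually (eventually_forall_continuousMap_apply hσ)]
      with x hxt hΦx hΘx hxΘ hxΘd hxσ
    have : fderiv ℂ Θ (Φ x) (fderiv ℂ Φ x (Z x)) = ContinuousMap.const _ σ * Θ (Φ x) := by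
      ext1 t
      rw [hxΘd, hxt, hxσ, diagCLM_apply, ContinuousMap.mul_apply, hxΘ]
      rfl
    rw [hkd x hΦx hΘx, this, weightedMeanCLM_const_mul, diagCLM_apply]

end VariationOfConstants

section Normalization

open VectorField

variable {n : ℕ}

theorem List.sum_map_eq_sum_count {ι M : Type*} [Fintype ι] [DecidableEq ι] [AddCommMonoid M]
    (l : List ι) (g : ι → M) : (l.map g).sum = ∑ i, l.count i • g i := by
  induction l with
  | nil => simp
  | cons a l ih =>
    simp [List.count_cons, add_smul, Finset.sum_add_distrib, ih, ite_smul, add_comm]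

/-- Monomials of the weight of a coordinate keep that property for every weight in the lattice. -/
theorem sum_map_eq_of_mem_qLattice {γ : Fin n → ℂ} {ρ : Fin n → ℤ} (hρ : ρ ∈ QLattice γ)
    {l : List (Fin n)} (hl : l ≠ []) {j : Fin n} (h : (l.map γ).sum = γ j) :
    (l.map fun i => (ρ i : ℂ)).sum = ρ j := by
  classical
  rcases l with _ | ⟨i, _ | ⟨i', l⟩⟩
  · exact absurd rfl hl
  · have : γ i = γ j := by simpa using h
    simp [hρ.2 i j this]
  · let L := i :: i' :: l
    have hlen : ∑ k, (L.count k : ℤ) = L.length := by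
      have := L.sum_map_eq_sum_count fun _ => (1 : ℤ)
      simpa using this.symm
    let c : Fin n → ℤ := fun k => L.count k - if k = j then 1 else 0
    have hres : IsResonanceRelation γ c := by
      refine ⟨?_, fun k => ?_, ?_, fun k k' hk hk' => ?_⟩
      · have h1 := L.sum_map_eq_sum_count γ
        rw [h] at h1
        simp only [c, Int.cast_sub, sub_mul, Finset.sum_sub_distrib]
        simp [h1]
      · simp only [c]
        split_ifs <;> omega
      · simp only [c, Finset.sum_sub_distrib, hlen]
        simp [L]
      · have key (k) (hk : c k < 0) : k = j := by
          by_contra hne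
          simp only [c, if_neg hne] at hk
          omega
        rw [key k hk, key k' hk']
    have h2 := hρ.1 c hres
    simp only [c, mul_sub, Finset.sum_sub_distrib] at h2
    have h3 : ∑ k, ρ k * (L.count k : ℤ) = ρ j := by
      rw [sub_eq_zero] at h2
      simpa using h2
    have h4 := L.sum_map_eq_sum_count fun k => (ρ k : ℂ)
    rw [h4, ← h3]
    simp [mul_comm]

theorem lieBracket_clm_right (Y : (Fin n → ℂ) → Fin n → ℂ) (T : (Fin n → ℂ) →L[ℂ] Fin n → ℂ)
    (x : Fin n → ℂ) :
    lieBracket ℂ Y (fun y => T y) x = T (Y x) - fderiv ℂ Y x (T x) := by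
  rw [lieBracket_eq]
  simp

/-- A vector field commuting with the linear field of weights `γ` commutes with the linear fields
whose weights belong to the toric lattice of `γ`. -/
theorem eventually_lieBracket_diagCLM_eq_zero {γ : Fin n → ℂ} {ρ : Fin n → ℤ}
    (hρ : ρ ∈ QLattice γ) {Y : (Fin n → ℂ) → Fin n → ℂ} (hY : AnalyticAt ℂ Y 0) (hY0 : Y 0 = 0)
    (h : ∀ᶠ x in 𝓝 0, lieBracket ℂ Y (fun y => diagCLM γ y) x = 0) :
    ∀ᶠ x in 𝓝 0, lieBracket ℂ Y (fun y => diagCLM (fun j => (ρ j : ℂ)) y) x = 0 := by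
  have hcomp (j : Fin n) : AnalyticAt ℂ (fun x => Y x j) 0 :=
    ((ContinuousLinearMap.proj (R := ℂ) (φ := fun _ : Fin n => ℂ) j).analyticAt _).comp hY
  have hfd : ∀ᶠ x in 𝓝 0, ∀ j v, fderiv ℂ (fun x => Y x j) x v = fderiv ℂ Y x v j := by
    filter_upwards [hY.eventually_analyticAt] with x hx j v
    have := (hasFDerivAt_pi'.1 hx.differentiableAt.hasFDerivAt) j
    rw [this.fderiv]
    rfl
  have key (j : Fin n) : ∀ᶠ x in 𝓝 0, fderiv ℂ (fun x => Y x j) x ((fun j => (ρ j : ℂ)) * x) =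
      ρ j * Y x j := by
    refine eventually_euler_eq_of_weights (hcomp j) (γ := γ) (a := γ j) ?_ fun l hl => ?_
    · filter_upwards [h, hfd] with x hx hx'
      rw [lieBracket_clm_right, sub_eq_zero, diagCLM_apply, diagCLM_apply] at hx
      rw [hx', ← hx, Pi.mul_apply]
    · by_cases hnil : l = []
      · right
        simp [hnil, iteratedPartial, hY0]
      · exact Or.inl (sum_map_eq_of_mem_qLattice hρ hnil hl)
  filter_upwards [eventually_all.2 key, hfd] with x hx hx'
  rw [lieBracket_clm_right, sub_eq_zero, diagCLM_apply, diagCLM_apply]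
  ext j
  rw [← hx', hx, Pi.mul_apply]

theorem isSemisimple_conj {K M : Type*} [Field K] [AddCommGroup M] [Module K M]
    [FiniteDimensional K M] {f : Module.End K M} (hf : f.IsSemisimple) (e : M ≃ₗ[K] M) :
    (e.conjAlgEquiv K f).IsSemisimple := by
  refine Module.End.isSemisimple_of_squarefree_aeval_eq_zero hf.minpoly_squarefree ?_
  rw [Polynomial.aeval_algHom_apply, minpoly.aeval, map_zero]

/-- Conjugating an endomorphism conjugates its semisimple part. -/
theorem conj_semisimplePart_eq {S M T N : (Fin n → ℂ) →L[ℂ] Fin n → ℂ}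
    (A : (Fin n → ℂ) ≃L[ℂ] (Fin n → ℂ))
    (hS : Module.End.IsSemisimple (S : Module.End ℂ (Fin n → ℂ)))
    (hM : IsNilpotent (M : Module.End ℂ (Fin n → ℂ))) (hSM : S ∘L M = M ∘L S)
    (hT : Module.End.IsSemisimple (T : Module.End ℂ (Fin n → ℂ)))
    (hN : IsNilpotent (N : Module.End ℂ (Fin n → ℂ))) (hTN : T ∘L N = N ∘L T)
    (h : (A : (Fin n → ℂ) →L[ℂ] Fin n → ℂ) ∘L (S + M) = (T + N) ∘L A) :
    (A : (Fin n → ℂ) →L[ℂ] Fin n → ℂ) ∘L S ∘L A.symm = T := by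
  let e := A.toLinearEquiv.conjAlgEquiv ℂ
  have hc1 : Commute (e (M : Module.End ℂ (Fin n → ℂ))) (e (S : Module.End ℂ (Fin n → ℂ))) := by
    have h1 : Commute (M : Module.End ℂ (Fin n → ℂ)) (S : Module.End ℂ (Fin n → ℂ)) :=
      LinearMap.ext fun x => (DFunLike.congr_fun hSM x).symm
    exact h1.map e
  have hc2 : Commute (N : Module.End ℂ (Fin n → ℂ)) (T : Module.End ℂ (Fin n → ℂ)) :=
    LinearMap.ext fun x => (DFunLike.congr_fun hTN x).symm
  have hsum : e (M : Module.End ℂ (Fin n → ℂ)) + e (S : Module.End ℂ (Fin n → ℂ)) =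
      (N : Module.End ℂ (Fin n → ℂ)) + (T : Module.End ℂ (Fin n → ℂ)) := by
    refine LinearMap.ext fun x => ?_
    have h1 := DFunLike.congr_fun h (A.symm x)
    have h2 : A (S (A.symm x)) + A (M (A.symm x)) = T x + N x := by simpa using h1
    rw [add_comm, add_comm (T x)] at h2
    exact h2
  have := (Module.End.isNilpotent_isSemisimple_unique (hM.map e)
    (isSemisimple_conj hS A.toLinearEquiv) hN hT hc1 hc2 hsum).2
  exact ContinuousLinearMap.ext fun x => DFunLike.congr_fun this x

/-- A normalization can be chosen tangent to the identity, with the given semisimple part. -/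
theorem AdmitsPDNormalization.exists_tangent_id {X : (Fin n → ℂ) → Fin n → ℂ}
    (hX : AnalyticAt ℂ X 0) {γ : Fin n → ℂ} {N : (Fin n → ℂ) →L[ℂ] Fin n → ℂ}
    (hJC : fderiv ℂ X 0 = diagCLM γ + N)
    (hnil : IsNilpotent (N : Module.End ℂ (Fin n → ℂ)))
    (hSN : diagCLM γ ∘L N = N ∘L diagCLM γ) (h : AdmitsPDNormalization ℂ X) :
    ∃ Y φ : (Fin n → ℂ) → Fin n → ℂ, AnalyticAt ℂ Y 0 ∧ AnalyticAt ℂ φ 0 ∧ Y 0 = 0 ∧ φ 0 = 0 ∧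
      fderiv ℂ φ 0 = ContinuousLinearMap.id ℂ _ ∧
      (∀ᶠ x in 𝓝 0, lieBracket ℂ Y (fun y => diagCLM γ y) x = 0) ∧
      ∀ᶠ x in 𝓝 0, fderiv ℂ φ x (Y x) = X (φ x) := by
  obtain ⟨V, Y, φ, hVo, h0V, hY, hφ, hY0, hφ0, hbij, ⟨S, M, hSM, hS, hM, hcomm, hbr⟩, hconj⟩ := h
  have hV : V ∈ 𝓝 0 := hVo.mem_nhds h0V
  let A : (Fin n → ℂ) ≃L[ℂ] (Fin n → ℂ) := ContinuousLinearEquiv.ofBijective (fderiv ℂ φ 0)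
    (LinearMap.ker_eq_bot.2 hbij.1) (LinearMap.range_eq_top.2 hbij.2)
  have hA : (A : (Fin n → ℂ) →L[ℂ] Fin n → ℂ) = fderiv ℂ φ 0 := rfl
  have hYa := hY 0 h0V
  have hφa := hφ 0 h0V
  have hlin : (fderiv ℂ φ 0) ∘L (fderiv ℂ Y 0) = (fderiv ℂ X 0) ∘L (fderiv ℂ φ 0) := by
    have h1 := hφa.fderiv.differentiableAt.hasFDerivAt.clm_apply hYa.differentiableAt.hasFDerivAt
    have h2 : HasFDerivAt (fun x => X (φ x)) ((fderiv ℂ X 0) ∘L (fderiv ℂ φ 0)) 0 := by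
      refine HasFDerivAt.comp (0 : Fin n → ℂ) ?_ hφa.differentiableAt.hasFDerivAt
      rw [hφ0]
      exact hX.differentiableAt.hasFDerivAt
    have h3 := h2.congr_of_eventuallyEq
      (f₁ := fun x => fderiv ℂ φ x (Y x)) (by filter_upwards [hV] with x hx using hconj x hx)
    simpa [hY0] using h1.unique h3
  have hS' : (A : (Fin n → ℂ) →L[ℂ] Fin n → ℂ) ∘L S ∘L A.symm = diagCLM γ := by
    refine conj_semisimplePart_eq A hS hM hcomm (diagCLM_isSemisimple γ) hnil hSN ?_
    rw [← hSM, ← hJC, hA, hlin]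
  have hB0 : A.symm (0 : Fin n → ℂ) = 0 := map_zero _
  have hBan : AnalyticAt ℂ (fun x => A.symm x) 0 :=
    (A.symm : (Fin n → ℂ) →L[ℂ] Fin n → ℂ).analyticAt 0
  have hB : Tendsto (fun x => A.symm x) (𝓝 0) (𝓝 0) := by
    simpa [hB0] using A.symm.continuous.tendsto 0
  refine ⟨fun x => A (Y (A.symm x)), fun x => φ (A.symm x), ?_, ?_, by simp [hY0], by simp [hφ0],
    ?_, ?_, ?_⟩
  · have h1 : AnalyticAt ℂ Y (A.symm 0) := by rwa [hB0]
    exact ((A : (Fin n → ℂ) →L[ℂ] Fin n → ℂ).analyticAt _).comp (h1.comp hBan)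
  · have h1 : AnalyticAt ℂ φ (A.symm 0) := by rwa [hB0]
    exact h1.comp hBan
  · have h1 : HasFDerivAt φ (A : (Fin n → ℂ) →L[ℂ] Fin n → ℂ) (A.symm 0) := by
      rw [hB0]
      exact hφa.differentiableAt.hasFDerivAt
    refine (h1.comp (0 : Fin n → ℂ) A.symm.hasFDerivAt).fderiv.trans ?_
    ext1 x
    simp
  · filter_upwards [hB.eventually hV] with x hx
    rw [lieBracket_clm_right, ← hS']
    have h1 := hbr _ hx
    rw [lieBracket_clm_right] at h1
    have h2 : HasFDerivAt (fun x => A (Y (A.symm x)))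
        ((A : (Fin n → ℂ) →L[ℂ] Fin n → ℂ) ∘L fderiv ℂ Y (A.symm x) ∘L A.symm) x :=
      A.hasFDerivAt.comp x
        ((hY _ hx).differentiableAt.hasFDerivAt.comp x A.symm.hasFDerivAt)
    rw [h2.fderiv]
    have h3 := congrArg A h1
    simpa using h3
  · filter_upwards [hB.eventually hV] with x hx
    have h1 := ((hφ _ hx).differentiableAt.hasFDerivAt.comp x A.symm.hasFDerivAt).fderiv
    have h2 : fderiv ℂ (fun x => φ (A.symm x)) x = _ := h1
    rw [h2]
    simpa using hconj _ hx

/-- The diagonal torus acts by isometries of the sup norm. -/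
theorem norm_expCurve_mul_le (ρ : Fin n → ℤ) (t : ℝ) (x : Fin n → ℂ) :
    ‖expCurve (fun j => Complex.I * ρ j) t * x‖ ≤ ‖x‖ := by
  refine (pi_norm_le_iff_of_nonneg (norm_nonneg x)).2 fun j => ?_
  have : (t : ℂ) * (Complex.I * ρ j) = ((t * ρ j : ℝ) : ℂ) * Complex.I := by push_cast; ring
  rw [Pi.mul_apply, expCurve, norm_mul, this, Complex.norm_exp_ofReal_mul_I, one_mul]
  exact norm_le_pi_norm x j

theorem exists_torusAction_of_normalization {X Y φ : (Fin n → ℂ) → Fin n → ℂ}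
    {γ : Fin n → ℂ} {r : ℕ} {ρ : Fin r → Fin n → ℤ} (hρ : ∀ k, ρ k ∈ QLattice γ)
    (hY : AnalyticAt ℂ Y 0) (hφ : AnalyticAt ℂ φ 0) (hY0 : Y 0 = 0) (hφ0 : φ 0 = 0)
    (hφd : fderiv ℂ φ 0 = ContinuousLinearMap.id ℂ _)
    (hbr : ∀ᶠ x in 𝓝 0, lieBracket ℂ Y (fun y => diagCLM γ y) x = 0)
    (hconj : ∀ᶠ x in 𝓝 0, fderiv ℂ φ x (Y x) = X (φ x)) :
    ∃ U : Set (Fin n → ℂ), IsOpen U ∧ (0 : Fin n → ℂ) ∈ U ∧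
      ∃ V : Fin r → (Fin n → ℂ) → (Fin n → ℂ),
        (∀ k, AnalyticOnNhd ℂ (V k) U) ∧
        (∀ k, V k 0 = 0 ∧ fderiv ℂ (V k) 0 = diagCLM (fun j => (ρ k j : ℂ))) ∧
        (∀ j k, ∀ x ∈ U, lieBracket ℂ (V j) (V k) x = 0) ∧
        (∀ k, ∀ x ∈ U, lieBracket ℂ X (V k) x = 0) ∧
        (∀ k, ∀ x ∈ U, ∃ c : ℝ → (Fin n → ℂ),
          (∀ t, c t ∈ U) ∧ c 0 = x ∧
          (∀ t : ℝ, HasDerivAt c (Complex.I • V k (c t)) t) ∧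
          (∀ t : ℝ, c (t + 2 * Real.pi) = c t)) := by
  let D : Fin r → (Fin n → ℂ) →L[ℂ] Fin n → ℂ := fun k => diagCLM fun j => (ρ k j : ℂ)
  obtain ⟨g, hg, hg0, hgd, hgφ, hφg⟩ := exists_analyticAt_localInverse hφ hφ0 hφd
  obtain ⟨O, hO, hOo, h0O⟩ := eventually_nhds_iff.1 (hg.eventually_analyticAt.and hφg)
  have hφt : Tendsto φ (𝓝 0) (𝓝 0) := by
    simpa only [ContinuousAt, hφ0] using hφ.continuousAt
  have hφO : ∀ᶠ x in 𝓝 0, φ x ∈ O := hφt (hOo.mem_nhds h0O)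
  obtain ⟨ε, hε, hball⟩ := Metric.eventually_nhds_iff_ball.1
    (((hφ.eventually_analyticAt.and hY.eventually_analyticAt).and (hgφ.and hφO)).and
      (hconj.and (eventually_all.2 fun k =>
        eventually_lieBracket_diagCLM_eq_zero (hρ k) hY hY0 hbr)))
  let U : Set (Fin n → ℂ) := O ∩ g ⁻¹' Metric.ball 0 ε
  have hgO : ContinuousOn g O := fun y hy => (hO y hy).1.continuousAt.continuousWithinAt
  have hUo : IsOpen U := hgO.isOpen_inter_preimage hOo Metric.isOpen_ball
  have h0U : (0 : Fin n → ℂ) ∈ U := ⟨h0O, by simp [hg0, hε]⟩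
  have hφU : ∀ x ∈ Metric.ball (0 : Fin n → ℂ) ε, φ x ∈ U := fun x hx =>
    ⟨(hball x hx).1.2.2, by simpa only [mem_preimage, (hball x hx).1.2.1] using hx⟩
  have hpull : ∀ y ∈ U, ∀ Z, pullback ℂ g Z y = fderiv ℂ φ (g y) (Z (g y)) := by
    intro y hy Z
    have hdg := (hO y hy.1).1.differentiableAt.hasFDerivAt
    have hdφ := (hball _ hy.2).1.1.1.differentiableAt.hasFDerivAt
    have h1 : (fderiv ℂ φ (g y)) ∘L (fderiv ℂ g y) = ContinuousLinearMap.id ℂ _ := by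
      refine (hdφ.comp y hdg).unique ((hasFDerivAt_id y).congr_of_eventuallyEq ?_)
      filter_upwards [hOo.mem_nhds hy.1] with z hz using (hO z hz).2
    have h2 : (fderiv ℂ g y) ∘L (fderiv ℂ φ (g y)) = ContinuousLinearMap.id ℂ _ := by
      have hdg' : HasFDerivAt g (fderiv ℂ g y) (φ (g y)) := by rwa [(hO y hy.1).2]
      refine (hdg'.comp (g y) hdφ).unique ((hasFDerivAt_id (g y)).congr_of_eventuallyEq ?_)
      filter_upwards [Metric.isOpen_ball.mem_nhds hy.2] with z hz using (hball z hz).1.2.1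
    rw [pullback, ContinuousLinearMap.inverse_eq h2 h1]
  have hV : ∀ k, ∀ y ∈ U, pullback ℂ g (fun x => D k x) =ᶠ[𝓝 y]
      fun z => fderiv ℂ φ (g z) (D k (g z)) := by
    intro k y hy
    filter_upwards [hUo.mem_nhds hy] with z hz using hpull z hz _
  have hX : ∀ y ∈ U, X =ᶠ[𝓝 y] pullback ℂ g Y := by
    intro y hy
    filter_upwards [hUo.mem_nhds hy] with z hz
    rw [hpull z hz, (hball _ hz.2).2.1, (hO z hz.1).2]
  refine ⟨U, hUo, h0U, fun k => pullback ℂ g (fun x => D k x), ?_, ?_, ?_, ?_, ?_⟩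
  · intro k y hy
    refine AnalyticAt.congr ?_ (hV k y hy).symm
    have hgy := (hO y hy.1).1
    have h1 : AnalyticAt ℂ (fun z => fderiv ℂ φ (g z)) y :=
      (hball _ hy.2).1.1.1.fderiv.comp hgy
    have h2 : AnalyticAt ℂ (fun z => D k (g z)) y := ((D k).analyticAt _).comp hgy
    exact h1.fun_clm_apply h2
  · intro k
    refine ⟨by simp [hpull 0 h0U, hg0], ?_⟩
    rw [(hV k 0 h0U).fderiv_eq]
    have h1 : AnalyticAt ℂ (fun z => fderiv ℂ φ (g z)) 0 :=
      (hball _ h0U.2).1.1.1.fderiv.comp hg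
    have h2 : HasFDerivAt (fun z => D k (g z)) ((D k) ∘L fderiv ℂ g 0) 0 :=
      (D k).hasFDerivAt.comp (0 : Fin n → ℂ) hg.differentiableAt.hasFDerivAt
    rw [(h1.differentiableAt.hasFDerivAt.clm_apply h2).fderiv]
    ext1 x
    simp [hg0, hφd, hgd, D]
  · intro j k y hy
    rw [← pullback_lieBracket (n := ⊤) (by simp) (hO y hy.1).1.contDiffAt
      (D j).differentiableAt (D k).differentiableAt, hpull y hy, lieBracket_clm_right,
      (D j).fderiv]
    simp only [D, diagCLM_apply]
    rw [mul_left_comm, sub_self, map_zero]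
  · intro k y hy
    rw [(hX y hy).lieBracket_vectorField_eq EventuallyEq.rfl,
      ← pullback_lieBracket (n := ⊤) (by simp) (hO y hy.1).1.contDiffAt
      (hball _ hy.2).1.1.2.differentiableAt (D k).differentiableAt, hpull y hy]
    have := (hball _ hy.2).2.2 k
    rw [this, map_zero]
  · intro k y hy
    let e : ℝ → Fin n → ℂ := fun t => expCurve (fun j => Complex.I * ρ k j) t * g y
    have he : ∀ t, e t ∈ Metric.ball (0 : Fin n → ℂ) ε := by
      intro t
      have h1 := hy.2
      simp only [mem_preimage, mem_ball_zero_iff] at h1 ⊢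
      exact (norm_expCurve_mul_le (ρ k) t (g y)).trans_lt h1
    refine ⟨fun t => φ (e t), fun t => hφU _ (he t), ?_, fun t => ?_, fun t => ?_⟩
    · have : e 0 = g y := by simp only [e, expCurve_zero, one_mul]
      show φ (e 0) = y
      rw [this, (hO y hy.1).2]
    · have h1 := ((hball _ (he t)).1.1.1.differentiableAt.hasFDerivAt.restrictScalars
        ℝ).comp_hasDerivAt t ((hasDerivAt_expCurve _ t).mul_const (g y))
      show HasDerivAt (fun t => φ (e t))
        (Complex.I • pullback ℂ g (fun x => D k x) (φ (e t))) t
      rw [hpull _ (hφU _ (he t)), (hball _ (he t)).1.2.1]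
      refine h1.congr_deriv ?_
      rw [ContinuousLinearMap.coe_restrictScalars', ← map_smul, ← map_smul]
      congr 1
      ext j
      simp only [D, e, diagCLM_apply, Pi.smul_apply, Pi.mul_apply, smul_eq_mul]
      ring
    · have : e (t + 2 * Real.pi) = e t := by
        simp only [e, expCurve_add, expCurve_two_pi, mul_one]
      exact congrArg φ this

/-- Commuting analytic vector fields with `2π`-periodic imaginary flows are simultaneously
linearizable. -/
theorem exists_simultaneous_linearization {U : Set (Fin n → ℂ)} (hUo : IsOpen U)
    (h0U : (0 : Fin n → ℂ) ∈ U) {r : ℕ} {ρ : Fin r → Fin n → ℤ}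
    {V : Fin r → (Fin n → ℂ) → Fin n → ℂ} (hV : ∀ k, AnalyticOnNhd ℂ (V k) U)
    (hV0 : ∀ k, V k 0 = 0 ∧ fderiv ℂ (V k) 0 = diagCLM fun j => (ρ k j : ℂ))
    (hcomm : ∀ j k, ∀ x ∈ U, lieBracket ℂ (V j) (V k) x = 0)
    (hper : ∀ k, ∀ x ∈ U, ∃ c : ℝ → (Fin n → ℂ), (∀ t, c t ∈ U) ∧ c 0 = x ∧
      (∀ t : ℝ, HasDerivAt c (Complex.I • V k (c t)) t) ∧ ∀ t : ℝ, c (t + 2 * Real.pi) = c t)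
    (s : Finset (Fin r)) :
    ∃ h : (Fin n → ℂ) → Fin n → ℂ, AnalyticAt ℂ h 0 ∧ h 0 = 0 ∧
      fderiv ℂ h 0 = ContinuousLinearMap.id ℂ _ ∧
      ∀ k ∈ s, ∀ᶠ x in 𝓝 0, fderiv ℂ h x (V k x) = diagCLM (fun j => (ρ k j : ℂ)) (h x) := by
  classical
  induction s using Finset.induction_on with
  | empty => exact ⟨fun x => x, analyticAt_id, rfl, fderiv_fun_id, by simp⟩
  | insert k s _ ih =>
    obtain ⟨h, hh, hh0, hhd, hlin⟩ := ih
    obtain ⟨g, hg, hg0, hgd, hgk, hgZ⟩ :=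
      exists_averaging hUo h0U (hV k) (hV0 k).1 (hV0 k).2 (hper k) hh hh0 hhd
    refine ⟨g, hg, hg0, hgd, fun j hj => ?_⟩
    obtain rfl | hj := Finset.mem_insert.1 hj
    · exact hgk
    · refine hgZ (V j) (hV j 0 h0U) ?_ _ (hlin j hj)
      filter_upwards [hUo.mem_nhds h0U] with y hy
      exact sub_eq_zero.1 (hcomm j k y hy)

/-- A vector field preserved by a linearizable torus action whose weights span `γ` admits a
normalization. -/
theorem admitsPDNormalization_of_torusAction {X : (Fin n → ℂ) → Fin n → ℂ}
    (hX : AnalyticAt ℂ X 0) (hX0 : X 0 = 0) {γ : Fin n → ℂ} {N : (Fin n → ℂ) →L[ℂ] Fin n → ℂ}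
    (hJC : fderiv ℂ X 0 = diagCLM γ + N)
    (hnil : IsNilpotent (N : Module.End ℂ (Fin n → ℂ)))
    (hSN : diagCLM γ ∘L N = N ∘L diagCLM γ) {h Z : (Fin n → ℂ) → Fin n → ℂ}
    (hh : AnalyticAt ℂ h 0) (hh0 : h 0 = 0) (hhd : fderiv ℂ h 0 = ContinuousLinearMap.id ℂ _)
    (hZ : AnalyticAt ℂ Z 0) (hlin : ∀ᶠ x in 𝓝 0, fderiv ℂ h x (Z x) = diagCLM γ (h x))
    (hbr : ∀ᶠ x in 𝓝 0, lieBracket ℂ X Z x = 0) : AdmitsPDNormalization ℂ X := by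
  obtain ⟨φ, hφ, hφ0, hφd, hφh, hhφ⟩ := exists_analyticAt_localInverse hh hh0 hhd
  have hφt : Tendsto φ (𝓝 0) (𝓝 0) := by
    simpa only [ContinuousAt, hφ0] using hφ.continuousAt
  have hφX : AnalyticAt ℂ X (φ 0) := by rwa [hφ0]
  have hφh' : AnalyticAt ℂ (fderiv ℂ h) (φ 0) := by rw [hφ0]; exact hh.fderiv
  let Y : (Fin n → ℂ) → Fin n → ℂ := fun y => fderiv ℂ h (φ y) (X (φ y))
  have hY : AnalyticAt ℂ Y 0 := (hφh'.comp hφ).fun_clm_apply (hφX.comp hφ)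
  have hinv : ∀ᶠ y in 𝓝 0, (fderiv ℂ h (φ y)) ∘L (fderiv ℂ φ y) = ContinuousLinearMap.id ℂ _ ∧
      (fderiv ℂ φ y) ∘L (fderiv ℂ h (φ y)) = ContinuousLinearMap.id ℂ _ := by
    filter_upwards [hφ.eventually_analyticAt, hφt.eventually hh.eventually_analyticAt,
      hhφ.eventually_nhds, hφt.eventually hφh.eventually_nhds] with y h1 h2 h3 h4
    have hdφ := h1.differentiableAt.hasFDerivAt
    have hdh := h2.differentiableAt.hasFDerivAt
    refine ⟨(hdh.comp y hdφ).unique ((hasFDerivAt_id y).congr_of_eventuallyEq h3), ?_⟩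
    have hdφ' : HasFDerivAt φ (fderiv ℂ φ y) (h (φ y)) := by rwa [h3.self_of_nhds]
    exact (hdφ'.comp (φ y) hdh).unique ((hasFDerivAt_id (φ y)).congr_of_eventuallyEq h4)
  have hpull : ∀ᶠ y in 𝓝 0, ∀ T, pullback ℂ φ T y = fderiv ℂ h (φ y) (T (φ y)) := by
    filter_upwards [hinv] with y hy T
    rw [pullback, ContinuousLinearMap.inverse_eq hy.2 hy.1]
  have hZpull : ∀ᶠ y in 𝓝 0, pullback ℂ φ Z y = diagCLM γ y := by
    filter_upwards [hpull, hφt.eventually hlin, hhφ] with y h1 h2 h3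
    rw [h1, h2, h3]
  have hYbr : ∀ᶠ y in 𝓝 0, lieBracket ℂ Y (fun y => diagCLM γ y) y = 0 := by
    filter_upwards [hpull.eventually_nhds, hZpull.eventually_nhds, hφ.eventually_analyticAt,
      hφt.eventually hX.eventually_analyticAt, hφt.eventually hZ.eventually_analyticAt,
      hφt.eventually hbr] with y h1 h2 h3 h4 h5 h6
    have hYp : Y =ᶠ[𝓝 y] pullback ℂ φ X := h1.mono fun z hz => (hz X).symm
    have hZp : (fun y => diagCLM γ y) =ᶠ[𝓝 y] pullback ℂ φ Z := h2.mono fun z hz => hz.symm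
    rw [hYp.lieBracket_vectorField_eq hZp, ← pullback_lieBracket (n := ⊤) (by simp)
      h3.contDiffAt h4.differentiableAt h5.differentiableAt, h1.self_of_nhds, h6, map_zero]
  have hconj : ∀ᶠ y in 𝓝 0, fderiv ℂ φ y (Y y) = X (φ y) := by
    filter_upwards [hinv] with y hy using DFunLike.congr_fun hy.2 (X (φ y))
  have hYd : fderiv ℂ Y 0 = diagCLM γ + N := by
    have h1 : HasFDerivAt (fun y => fderiv ℂ h (φ y)) (fderiv ℂ (fun y => fderiv ℂ h (φ y)) 0) 0 :=
      (hφh'.comp hφ).differentiableAt.hasFDerivAt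
    have h2 := hφX.differentiableAt.hasFDerivAt.comp (0 : Fin n → ℂ)
      hφ.differentiableAt.hasFDerivAt
    have h3 : HasFDerivAt Y _ 0 := h1.clm_apply h2
    rw [h3.fderiv]
    ext1 x
    simp [hφ0, hφd, hhd, hX0, hJC]
  obtain ⟨O, hO, hOo, h0O⟩ := eventually_nhds_iff.1
    ((hY.eventually_analyticAt.and hφ.eventually_analyticAt).and (hYbr.and hconj))
  refine ⟨O, Y, φ, hOo, h0O, fun y hy => (hO y hy).1.1, fun y hy => (hO y hy).1.2, ?_, hφ0, ?_,
    ⟨diagCLM γ, N, hYd, diagCLM_isSemisimple γ, hnil, hSN, fun y hy => (hO y hy).2.1⟩,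
    fun y hy => (hO y hy).2.2⟩
  · simp [Y, hφ0, hX0]
  · rw [hφd]
    exact Function.bijective_id

end Normalization

/-- **Toric characterization of Poincaré–Dulac normalization** (Zung). A
holomorphic vector field `X` near `0 ∈ ℂⁿ` with `X 0 = 0` and semisimple
linear part `diag γ` admits a convergent Poincaré–Dulac normalization iff it
is preserved by an effective holomorphic torus action of dimension `r` (the
toric degree) with the appropriate weights: there are holomorphic vector
fields `V₁, …, V_r` near `0`, pairwise commuting and commuting with `X`,
with `V_k 0 = 0`, `DV_k(0) = diag ρᵏ` for a `ℤ`-basis `ρ¹, …, ρʳ` of `Q(γ)`,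
such that each `i·V_k` is periodic of period `2π`. -/
theorem admitsPDNormalization_iff_torusAction
    (n : ℕ) (X : (Fin n → ℂ) → (Fin n → ℂ))
    (W : Set (Fin n → ℂ)) (hWopen : IsOpen W) (h0W : (0 : Fin n → ℂ) ∈ W)
    (hXan : AnalyticOnNhd ℂ X W) (hX0 : X 0 = 0)
    (γ : Fin n → ℂ) (N : (Fin n → ℂ) →L[ℂ] (Fin n → ℂ))
    (hJC : fderiv ℂ X 0 = diagCLM γ + N)
    (hnil : IsNilpotent (N : Module.End ℂ (Fin n → ℂ)))
    (hSN : diagCLM γ ∘L N = N ∘L diagCLM γ)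
    (r : ℕ) (ρ : Fin r → Fin n → ℤ)
    (hρmem : ∀ k, ρ k ∈ QLattice γ)
    (hρbasis : ∀ σ ∈ QLattice γ, ∃! a : Fin r → ℤ, ∑ k, a k • ρ k = σ) :
    AdmitsPDNormalization ℂ X ↔
      ∃ U : Set (Fin n → ℂ), IsOpen U ∧ (0 : Fin n → ℂ) ∈ U ∧
        ∃ V : Fin r → (Fin n → ℂ) → (Fin n → ℂ),
          (∀ k, AnalyticOnNhd ℂ (V k) U) ∧
          (∀ k, V k 0 = 0 ∧
            fderiv ℂ (V k) 0 = diagCLM (fun j => (ρ k j : ℂ))) ∧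
          (∀ j k, ∀ x ∈ U, VectorField.lieBracket ℂ (V j) (V k) x = 0) ∧
          (∀ k, ∀ x ∈ U, VectorField.lieBracket ℂ X (V k) x = 0) ∧
          (∀ k, ∀ x ∈ U, ∃ c : ℝ → (Fin n → ℂ),
            (∀ t, c t ∈ U) ∧ c 0 = x ∧
            (∀ t : ℝ, HasDerivAt c (Complex.I • V k (c t)) t) ∧
            (∀ t : ℝ, c (t + 2 * Real.pi) = c t)) := by
  constructor
  · intro h
    obtain ⟨Y, φ, hY, hφ, hY0, hφ0, hφd, hbr, hconj⟩ :=
      h.exists_tangent_id (hXan 0 h0W) hJC hnil hSN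
    exact exists_torusAction_of_normalization hρmem hY hφ hY0 hφ0 hφd hbr hconj
  · rintro ⟨U, hUo, h0U, V, hV, hV0, hcomm, hXV, hper⟩
    obtain ⟨α, hα⟩ := exists_eq_sum_smul_of_qLattice fun σ hσ => (hρbasis σ hσ).exists
    obtain ⟨h, hh, hh0, hhd, hlin⟩ :=
      exists_simultaneous_linearization hUo h0U hV hV0 hcomm hper Finset.univ
    have hZ : ∀ x ∈ U, HasFDerivAt (fun x => ∑ k, α k • V k x) (∑ k, α k • fderiv ℂ (V k) x) x :=
      fun x hx => HasFDerivAt.fun_sum fun k _ =>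
        (hV k x hx).differentiableAt.hasFDerivAt.const_smul (α k)
    refine admitsPDNormalization_of_torusAction (hXan 0 h0W) hX0 hJC hnil hSN hh hh0 hhd
      (Z := fun x => ∑ k, α k • V k x) ?_ ?_ ?_
    · exact Finset.analyticAt_fun_sum _ fun k _ => (hV k 0 h0U).const_smul (c := α k)
    · filter_upwards [eventually_all.2 fun k => hlin k (Finset.mem_univ k)] with x hx
      rw [map_sum, diagCLM_apply, hα, Finset.sum_mul]
      refine Finset.sum_congr rfl fun k _ => ?_
      rw [map_smul, hx, diagCLM_apply, smul_mul_assoc]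
    · filter_upwards [hUo.mem_nhds h0U] with x hx
      rw [VectorField.lieBracket, (hZ x hx).fderiv, map_sum, sum_apply, ← Finset.sum_sub_distrib]
      refine Finset.sum_eq_zero fun k _ => ?_
      have := hXV k x hx
      rw [VectorField.lieBracket, sub_eq_zero] at this
      rw [smul_apply, map_smul, this, sub_self]
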